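/- Under hypotheses (H0)–(H3), the Markov operator P possesses a unique invariant probability measure μ* (i.e. μ*P = μ*), this measure is ergodic, and μ* has finite first moment, i.e. μ* ∈ M_{1,1}. -/

import Mathlib

open MeasureTheory ProbabilityTheory Filter Bornology
open scoped ENNReal NNReal Topology

variable {E : Type*} [MeasurableSpace E] [MetricSpace E] [CompleteSpace E]
  [SecondCountableTopology E] [BorelSpace E]

/-- The Markov operator acting on functions: `Pf(x) = ∫ f(y) π(x, dy)`. -/
noncomputable def Pfun (π : Kernel E E) (f : E → ℝ) : E → ℝ := fun x => ∫ y, f y ∂(π x)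

/-- The Markov operator acting on measures (the transfer operator `ν ↦ νP`). -/
noncomputable def Pmeas (π : Kernel E E) (ν : MeasureTheory.Measure E) :
    MeasureTheory.Measure E := ν.bind (fun x => π x)

/-- `ν ∈ M_{1,1}`: a Borel probability measure with finite first moment. -/
def FiniteFirstMoment (ν : MeasureTheory.Measure E) : Prop :=
  IsProbabilityMeasure ν ∧ ∃ x₀ : E, Integrable (fun x => dist x₀ x) ν

/-- The Wasserstein (dual-Lipschitz) distance between two measures. -/
noncomputable def wassDist (ν₁ ν₂ : MeasureTheory.Measure E) : ℝ :=
  sSup {r : ℝ | ∃ f : E → ℝ, LipschitzWith 1 f ∧ r = |∫ x, f x ∂ν₁ - ∫ x, f x ∂ν₂|}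

/-- The natural filtration of the coordinate process on `ℕ → E`. -/
def natFilt : Filtration ℕ (MeasurableSpace.pi : MeasurableSpace (ℕ → E)) :=
  Filtration.natural (fun k (ω : ℕ → E) => ω k)
    (fun k => (measurable_pi_apply k).stronglyMeasurable)

/-- `ℙ` is the law of the Markov chain on `E^ℕ` with transition probability `π` and
initial distribution `ν`. -/
structure IsMarkovChainLaw (π : Kernel E E) (ν : MeasureTheory.Measure E)
    (P : MeasureTheory.Measure (ℕ → E)) : Prop where
  prob : IsProbabilityMeasure P
  init : P.map (fun ω => ω 0) = ν
  markov : ∀ (n : ℕ) (g : E → ℝ), Measurable g → IsBounded (Set.range g) →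
    P[(fun ω => g (ω (n + 1))) | natFilt n] =ᵐ[P] fun ω => ∫ y, g y ∂(π (ω n))

/-- The corrector function `χ = ∑_{i≥0} Pⁱψ`. -/
noncomputable def chiFun (π : Kernel E E) (ψ : E → ℝ) : E → ℝ :=
  fun x => ∑' i : ℕ, (Pfun π)^[i] ψ x

/-- The martingale `S_n = χ(X_n) - χ(X_0) + ∑_{i=0}^n ψ(X_i)` as a function of the trajectory. -/
noncomputable def SFun (π : Kernel E E) (ψ : E → ℝ) (n : ℕ) : (ℕ → E) → ℝ :=
  fun ω => chiFun π ψ (ω n) - chiFun π ψ (ω 0) + ∑ i ∈ Finset.range (n + 1), ψ (ω i)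

/-- The martingale differences `Z_n = χ(X_n) - χ(X_{n-1}) + ψ(X_n)`. -/
noncomputable def ZFun (π : Kernel E E) (ψ : E → ℝ) (n : ℕ) : (ℕ → E) → ℝ :=
  fun ω => chiFun π ψ (ω n) - chiFun π ψ (ω (n - 1)) + ψ (ω n)

/-!
Wasserstein convergence implies weak convergence, and Wasserstein-Cauchy sequences are tight, so
`M_{1,1}` is a complete metric space. Some iterate of the Markov operator is then a strict
contraction of this space, so the operator has a fixed point `ρ`, and `Pⁿg(x) → ∫ g dρ` for every
bounded continuous `g` and every starting point `x`. Integrating this limit against an arbitrary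
invariant probability measure, with or without moments, shows that `ρ` is the only one.

Uniqueness yields ergodicity. Let `A` be a shift-invariant event of positive probability for the
stationary chain. A martingale increment is orthogonal to its past, and stationarity moves it
arbitrarily far into the future, where `A` is approximated by past events; hence its integral over
`A` vanishes. So conditioning the chain on `A` gives again a stationary Markov chain, whose initial
law can only be `ρ`. A Markov chain law being determined by its initial law, `A` has probability
one.
-/

open scoped BoundedContinuousFunction

section Wasserstein

variable {X : Type*} [MeasurableSpace X] [MetricSpace X] {ν ν₁ ν₂ ν₃ : Measure X} {r : ℝ}

theorem wassDist_nonneg (ν₁ ν₂ : Measure X) : 0 ≤ wassDist ν₁ ν₂ := by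
  refine Real.sSup_nonneg ?_
  rintro _ ⟨f, -, rfl⟩
  exact abs_nonneg _

theorem wassDist_le (h : ∀ f : X → ℝ, LipschitzWith 1 f → |∫ x, f x ∂ν₁ - ∫ x, f x ∂ν₂| ≤ r) :
    wassDist ν₁ ν₂ ≤ r := by
  refine csSup_le ⟨_, fun _ => 0, LipschitzWith.const' 0, rfl⟩ ?_
  rintro _ ⟨f, hf, rfl⟩
  exact h f hf

theorem wassDist_self (ν : Measure X) : wassDist ν ν = 0 :=
  le_antisymm (wassDist_le fun f _ => by simp) (wassDist_nonneg ν ν)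

theorem wassDist_comm (ν₁ ν₂ : Measure X) : wassDist ν₁ ν₂ = wassDist ν₂ ν₁ := by
  simp only [wassDist, abs_sub_comm]

variable [BorelSpace X]

namespace FiniteFirstMoment

theorem integrable_lipschitzWith (hν : FiniteFirstMoment ν) {K : ℝ≥0} {f : X → ℝ}
    (hf : LipschitzWith K f) : Integrable f ν := by
  obtain ⟨_, x, hx⟩ := hν
  refine ((integrable_const |f x|).add (hx.const_mul (K : ℝ))).mono'
    hf.continuous.aestronglyMeasurable (ae_of_all _ fun y => ?_)
  calc ‖f y‖ ≤ ‖f x‖ + ‖f x - f y‖ := norm_le_norm_add_norm_sub (f x) (f y)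
    _ ≤ |f x| + K * dist x y := by
      gcongr
      · exact le_rfl
      · simpa [Real.dist_eq] using hf.dist_le_mul x y

theorem integrable_dist (hν : FiniteFirstMoment ν) (x : X) : Integrable (dist x) ν :=
  hν.integrable_lipschitzWith (LipschitzWith.dist_right x)

theorem abs_integral_sub_le (hν : FiniteFirstMoment ν) (x : X) {f : X → ℝ}
    (hf : LipschitzWith 1 f) : |∫ y, f y ∂ν - f x| ≤ ∫ y, dist x y ∂ν := by
  have := hν.1
  calc |∫ y, f y ∂ν - f x| = |∫ y, (f y - f x) ∂ν| := by
        rw [integral_sub (hν.integrable_lipschitzWith hf) (integrable_const _)]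
        simp
    _ ≤ ∫ y, |f y - f x| ∂ν := abs_integral_le_integral_abs
    _ ≤ ∫ y, dist x y ∂ν := by
        refine integral_mono_of_nonneg (ae_of_all _ fun _ => abs_nonneg _)
          (hν.integrable_dist x) (ae_of_all _ fun y => ?_)
        simpa [Real.dist_eq, dist_comm y x] using hf.dist_le_mul y x

theorem bddAbove_wassDist_set (h₁ : FiniteFirstMoment ν₁) (h₂ : FiniteFirstMoment ν₂) :
    BddAbove {r : ℝ | ∃ f : X → ℝ, LipschitzWith 1 f ∧
      r = |∫ x, f x ∂ν₁ - ∫ x, f x ∂ν₂|} := by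
  obtain ⟨x, -⟩ := h₁.2
  refine ⟨∫ y, dist x y ∂ν₁ + ∫ y, dist x y ∂ν₂, ?_⟩
  rintro _ ⟨f, hf, rfl⟩
  calc |∫ y, f y ∂ν₁ - ∫ y, f y ∂ν₂|
      ≤ |∫ y, f y ∂ν₁ - f x| + |f x - ∫ y, f y ∂ν₂| := abs_sub_le _ _ _
    _ ≤ ∫ y, dist x y ∂ν₁ + ∫ y, dist x y ∂ν₂ := by
      rw [abs_sub_comm (f x)]
      exact add_le_add (h₁.abs_integral_sub_le x hf) (h₂.abs_integral_sub_le x hf)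

theorem abs_integral_sub_integral_le (h₁ : FiniteFirstMoment ν₁) (h₂ : FiniteFirstMoment ν₂)
    {K : ℝ≥0} {f : X → ℝ} (hf : LipschitzWith K f) :
    |∫ x, f x ∂ν₁ - ∫ x, f x ∂ν₂| ≤ K * wassDist ν₁ ν₂ := by
  have := h₁.1
  have := h₂.1
  have unit_case : ∀ g : X → ℝ, LipschitzWith 1 g →
      |∫ x, g x ∂ν₁ - ∫ x, g x ∂ν₂| ≤ wassDist ν₁ ν₂ := fun g hg =>
    le_csSup (bddAbove_wassDist_set h₁ h₂) ⟨g, hg, rfl⟩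
  rcases eq_or_ne K 0 with rfl | hK
  · obtain ⟨x₀, -⟩ := h₁.2
    have hconst : f = fun _ => f x₀ := funext fun x => by simpa using hf.dist_le_mul x x₀
    rw [hconst]
    simp
  · have hscale : LipschitzWith 1 fun x => (K : ℝ)⁻¹ * f x := by
      simpa [Function.comp_def, inv_mul_cancel₀ hK] using (lipschitzWith_smul (K : ℝ)⁻¹).comp hf
    have := unit_case _ hscale
    simp only [integral_const_mul, ← mul_sub, abs_mul, abs_inv, NNReal.abs_eq] at this
    rwa [inv_mul_le_iff₀ (by positivity)] at this

theorem wassDist_triangle (h₁ : FiniteFirstMoment ν₁) (h₂ : FiniteFirstMoment ν₂)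
    (h₃ : FiniteFirstMoment ν₃) : wassDist ν₁ ν₃ ≤ wassDist ν₁ ν₂ + wassDist ν₂ ν₃ :=
  wassDist_le fun f hf =>
    calc |∫ x, f x ∂ν₁ - ∫ x, f x ∂ν₃|
        ≤ |∫ x, f x ∂ν₁ - ∫ x, f x ∂ν₂| + |∫ x, f x ∂ν₂ - ∫ x, f x ∂ν₃| := abs_sub_le _ _ _
      _ ≤ wassDist ν₁ ν₂ + wassDist ν₂ ν₃ := by
        simpa using add_le_add (h₁.abs_integral_sub_integral_le h₂ hf)
          (h₂.abs_integral_sub_integral_le h₃ hf)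

theorem tendsto_integral_truncation (hν : FiniteFirstMoment ν) {K : ℝ≥0} {f : X → ℝ}
    (hf : LipschitzWith K f) :
    Tendsto (fun k : ℕ => ∫ x, max (-k : ℝ) (min (f x) k) ∂ν) atTop (𝓝 (∫ x, f x ∂ν)) := by
  refine tendsto_integral_of_dominated_convergence (fun x => ‖f x‖)
    (fun k => ((hf.min_const _).const_max _).continuous.aestronglyMeasurable)
    (hν.integrable_lipschitzWith hf).norm (fun k => ae_of_all _ fun x => ?_)
    (ae_of_all _ fun x => ?_)
  · have : (0 : ℝ) ≤ k := k.cast_nonneg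
    rw [Real.norm_eq_abs, Real.norm_eq_abs, abs_le]
    exact ⟨le_max_of_le_right (le_min (neg_abs_le _) (by linarith [abs_nonneg (f x)])),
      max_le (by linarith [abs_nonneg (f x)]) ((min_le_left _ _).trans (le_abs_self _))⟩
  · obtain ⟨k₀, hk₀⟩ := exists_nat_ge |f x|
    refine tendsto_const_nhds.congr' ?_
    filter_upwards [eventually_ge_atTop k₀] with k hk
    have hfk : |f x| ≤ k := hk₀.trans (by exact_mod_cast hk)
    rw [min_eq_left (abs_le.1 hfk).2, max_eq_right (abs_le.1 hfk).1]

theorem wassDist_le_of_bounded (h₁ : FiniteFirstMoment ν₁) (h₂ : FiniteFirstMoment ν₂)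
    (h : ∀ f : X →ᵇ ℝ, LipschitzWith 1 f → |∫ x, f x ∂ν₁ - ∫ x, f x ∂ν₂| ≤ r) :
    wassDist ν₁ ν₂ ≤ r := by
  refine wassDist_le fun f hf => le_of_tendsto'
    ((h₁.tendsto_integral_truncation hf).sub (h₂.tendsto_integral_truncation hf)).abs fun k => ?_
  have hk : LipschitzWith 1 fun x => max (-k : ℝ) (min (f x) k) := (hf.min_const _).const_max _
  have hbound : ∀ x, ‖max (-k : ℝ) (min (f x) k)‖ ≤ k := fun x =>
    abs_le.2 ⟨le_max_left _ _, max_le (by linarith [k.cast_nonneg (α := ℝ)]) (min_le_right _ _)⟩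
  exact h (.ofNormedAddCommGroup _ hk.continuous k hbound) hk

end FiniteFirstMoment

end Wasserstein

section Tightness

variable {X : Type*} [MeasurableSpace X]

theorem isTightMeasureSet_of_finite [TopologicalSpace X] {S : Set (Measure X)} (hS : S.Finite)
    (h : ∀ μ ∈ S, IsTightMeasureSet {μ}) : IsTightMeasureSet S := by
  induction S, hS using Set.Finite.induction_on with
  | empty =>
    rw [isTightMeasureSet_iff_exists_isCompact_measure_compl_le]
    exact fun _ _ => ⟨∅, isCompact_empty, by simp⟩
  | insert _ _ ih =>
    rw [Set.insert_eq]
    exact (h _ (Set.mem_insert _ _)).union (ih fun μ hμ => h μ (Set.mem_insert_of_mem _ hμ))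

theorem isTightMeasureSet_of_forall_exists_finite_cover [PseudoMetricSpace X] [CompleteSpace X]
    {S : Set (Measure X)}
    (h : ∀ r > 0, ∀ ε > (0 : ℝ≥0∞), ∃ t : Set X, t.Finite ∧
      ∀ μ ∈ S, μ (⋃ x ∈ t, Metric.closedBall x r)ᶜ ≤ ε) :
    IsTightMeasureSet S := by
  rw [isTightMeasureSet_iff_exists_isCompact_measure_compl_le]
  intro ε hε
  obtain ⟨ε', hε', hsum⟩ := ENNReal.exists_pos_sum_of_countable' hε.ne' ℕ
  choose t ht htS using fun m : ℕ =>
    h (1 / ((m : ℝ) + 1)) Nat.one_div_pos_of_nat (ε' m) (hε' m)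
  refine ⟨⋂ m, ⋃ x ∈ t m, Metric.closedBall x (1 / ((m : ℝ) + 1)),
    TotallyBounded.isCompact_of_isClosed (Metric.totallyBounded_iff.2 fun δ hδ => ?_)
      (isClosed_iInter fun m => (ht m).isClosed_biUnion fun _ _ => Metric.isClosed_closedBall),
    fun μ hμ => ?_⟩
  · obtain ⟨m, hm⟩ := exists_nat_one_div_lt hδ
    exact ⟨t m, ht m, (Set.iInter_subset _ m).trans
      (Set.iUnion₂_mono fun x _ => Metric.closedBall_subset_ball hm)⟩
  · rw [Set.compl_iInter]
    exact (measure_iUnion_le _).trans ((ENNReal.tsum_le_tsum fun m => htS m μ hμ).trans hsum.le)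

end Tightness

/-- The space `M_{1,1}` of probability measures with finite first moment, carrying the
Wasserstein metric. -/
def WassersteinSpace (X : Type*) [MeasurableSpace X] [MetricSpace X] : Type _ :=
  {ν : Measure X // FiniteFirstMoment ν}

namespace WassersteinSpace

variable {X : Type*} [MeasurableSpace X] [MetricSpace X]

/-- The underlying probability measure, in Mathlib's space of probability measures with the
topology of weak convergence. -/
def toProbabilityMeasure (ν : WassersteinSpace X) : ProbabilityMeasure X :=
  ⟨ν.1, ν.2.1⟩

instance (ν : WassersteinSpace X) : IsProbabilityMeasure ν.1 := ν.2.1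

theorem toProbabilityMeasure_injective :
    Function.Injective (toProbabilityMeasure : WassersteinSpace X → ProbabilityMeasure X) :=
  fun _ _ h => Subtype.ext (congrArg (fun μ : ProbabilityMeasure X => (μ : Measure X)) h)

variable [BorelSpace X]

noncomputable instance : PseudoMetricSpace (WassersteinSpace X) where
  dist ν₁ ν₂ := wassDist ν₁.1 ν₂.1
  dist_self ν := wassDist_self ν.1
  dist_comm ν₁ ν₂ := wassDist_comm ν₁.1 ν₂.1
  dist_triangle ν₁ ν₂ ν₃ := ν₁.2.wassDist_triangle ν₂.2 ν₃.2

theorem dist_def (ν₁ ν₂ : WassersteinSpace X) : dist ν₁ ν₂ = wassDist ν₁.1 ν₂.1 := rfl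

theorem abs_integral_sub_integral_le (ν₁ ν₂ : WassersteinSpace X) {K : ℝ≥0} {f : X → ℝ}
    (hf : LipschitzWith K f) : |∫ x, f x ∂ν₁.1 - ∫ x, f x ∂ν₂.1| ≤ K * dist ν₁ ν₂ :=
  ν₁.2.abs_integral_sub_integral_le ν₂.2 hf

theorem continuous_toProbabilityMeasure :
    Continuous (toProbabilityMeasure : WassersteinSpace X → ProbabilityMeasure X) := by
  refine continuous_iff_continuousAt.2 fun ρ => ?_
  refine tendsto_iff_forall_lipschitz_integral_tendsto.2 fun f _ ⟨K, hf⟩ => ?_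
  rw [tendsto_iff_dist_tendsto_zero]
  have hdist : Tendsto (fun ν => (K : ℝ) * dist ν ρ) (𝓝 ρ) (𝓝 0) := by
    simpa using (tendsto_iff_dist_tendsto_zero.1 (tendsto_id (x := 𝓝 ρ))).const_mul (K : ℝ)
  exact squeeze_zero (fun _ => dist_nonneg) (fun ν => abs_integral_sub_integral_le ν ρ hf) hdist

noncomputable instance : MetricSpace (WassersteinSpace X) where
  eq_of_dist_eq_zero h := toProbabilityMeasure_injective
    ((Metric.inseparable_iff.2 h).map continuous_toProbabilityMeasure).eq

theorem tendsto_integral {ι : Type*} {l : Filter ι} {ν : ι → WassersteinSpace X}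
    {ρ : WassersteinSpace X} (h : Tendsto ν l (𝓝 ρ)) (g : X →ᵇ ℝ) :
    Tendsto (fun i => ∫ x, g x ∂(ν i).1) l (𝓝 (∫ x, g x ∂ρ.1)) :=
  ProbabilityMeasure.tendsto_iff_forall_integral_tendsto.1
    ((continuous_toProbabilityMeasure.tendsto ρ).comp h) g

/-- The Dirac mass, as a point of the Wasserstein space. -/
noncomputable def dirac (x : X) : WassersteinSpace X :=
  ⟨Measure.dirac x, inferInstance, x,
    integrable_dirac' (by fun_prop : Continuous (dist x)).stronglyMeasurable (by simp)⟩

theorem integral_dist_le_dist_dirac (ν : WassersteinSpace X) (x : X) :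
    ∫ y, dist x y ∂ν.1 ≤ dist ν (dirac x) := by
  have h := abs_integral_sub_integral_le ν (dirac x) (LipschitzWith.dist_right x)
  simpa [dirac] using (le_abs_self _).trans h

theorem measureReal_le_measureReal_thickening_add (ν₁ ν₂ : WassersteinSpace X) {r : ℝ}
    (hr : 0 < r) {s : Set X} (hs : MeasurableSet s) :
    ν₁.1.real s ≤ ν₂.1.real (Metric.thickening r s) + dist ν₁ ν₂ / r := by
  let f : X → ℝ := fun x => thickenedIndicator hr s x
  have hf : LipschitzWith r.toNNReal⁻¹ f := by
    rw [← one_mul r.toNNReal⁻¹]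
    exact NNReal.isometry_coe.lipschitz.comp (lipschitzWith_thickenedIndicator hr s)
  have hle : s.indicator 1 ≤ f := Set.indicator_le'
    (fun x hx => NNReal.coe_le_coe.2 (thickenedIndicator_one hr s hx).ge)
    fun x _ => NNReal.coe_nonneg _
  have hge : f ≤ (Metric.thickening r s).indicator 1 := Set.le_indicator
    (fun x _ => NNReal.coe_le_coe.2 (thickenedIndicator_le_one hr s x))
    fun x hx => NNReal.coe_le_coe.2 (thickenedIndicator_zero hr s hx).le
  have hint : ∀ ν : WassersteinSpace X, Integrable f ν.1 := fun ν =>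
    ν.2.integrable_lipschitzWith hf
  have hlow : ν₁.1.real s ≤ ∫ x, f x ∂ν₁.1 := by
    rw [← integral_indicator_one hs]
    exact integral_mono ((integrable_const 1).indicator hs) (hint ν₁) hle
  have hupp : ∫ x, f x ∂ν₂.1 ≤ ν₂.1.real (Metric.thickening r s) := by
    have hm := (Metric.isOpen_thickening (δ := r) (E := s)).measurableSet
    rw [← integral_indicator_one hm]
    exact integral_mono (hint ν₂) ((integrable_const 1).indicator hm) hge
  have hdist := (le_abs_self _).trans (abs_integral_sub_integral_le ν₁ ν₂ hf)
  rw [NNReal.coe_inv, Real.coe_toNNReal r hr.le, inv_mul_eq_div] at hdist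
  linarith

theorem finiteFirstMoment_of_tendsto {ν : ℕ → WassersteinSpace X} {ρ : ProbabilityMeasure X}
    (hν : IsBounded (Set.range ν))
    (hρ : Tendsto (fun n => (ν n).toProbabilityMeasure) atTop (𝓝 ρ)) :
    FiniteFirstMoment (ρ : Measure X) := by
  obtain ⟨x, -⟩ := (ν 0).2.2
  obtain ⟨M, hM⟩ := hν.subset_closedBall (dirac x)
  have hcont : Continuous fun y : X => dist x y := by fun_prop
  refine ⟨inferInstance, x, hcont.aestronglyMeasurable, ?_⟩
  rw [hasFiniteIntegral_iff_ofReal (ae_of_all _ fun y => dist_nonneg)]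
  refine (lintegral_le_liminf_lintegral_of_forall_isOpen_measure_le_liminf_measure hcont
    (fun _ => dist_nonneg)
    fun G hG => ProbabilityMeasure.le_liminf_measure_open_of_tendsto hρ hG).trans_lt ?_
  have hbound : ∀ n, ∫⁻ y, ENNReal.ofReal (dist x y) ∂(ν n).1 ≤ ENNReal.ofReal M := fun n => by
    rw [← ofReal_integral_eq_lintegral_ofReal ((ν n).2.integrable_dist x)
      (ae_of_all _ fun _ => dist_nonneg)]
    exact ENNReal.ofReal_le_ofReal
      ((integral_dist_le_dist_dirac (ν n) x).trans (hM (Set.mem_range_self n)))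
  calc _ ≤ liminf (fun _ : ℕ => ENNReal.ofReal M) atTop :=
        liminf_le_liminf (Eventually.of_forall hbound)
    _ < ⊤ := by simp

theorem dist_le_of_tendsto {ι : Type*} {l : Filter ι} [l.NeBot] {ν : ι → WassersteinSpace X}
    {μ ρ : WassersteinSpace X} {r : ℝ} (hr : ∀ᶠ i in l, dist μ (ν i) ≤ r)
    (hρ : Tendsto (fun i => (ν i).toProbabilityMeasure) l (𝓝 ρ.toProbabilityMeasure)) :
    dist μ ρ ≤ r := by
  refine μ.2.wassDist_le_of_bounded ρ.2 fun f hf => ?_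
  have hlim := ProbabilityMeasure.tendsto_iff_forall_integral_tendsto.1 hρ f
  refine le_of_tendsto (hlim.const_sub (∫ x, f x ∂μ.1)).abs (hr.mono fun i hi => ?_)
  exact (abs_integral_sub_integral_le μ (ν i) hf).trans (by simpa using hi)

variable [CompleteSpace X] [SecondCountableTopology X]

theorem isTightMeasureSet_of_totallyBounded {S : Set (WassersteinSpace X)}
    (hS : TotallyBounded S) : IsTightMeasureSet ((fun ν : WassersteinSpace X => ν.1) '' S) := by
  refine isTightMeasureSet_of_forall_exists_finite_cover fun r hr ε hε => ?_
  obtain ⟨η, -, hηε⟩ := ENNReal.lt_iff_exists_real_btwn.1 hε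
  have hη : 0 < η := by simpa using hηε.1
  obtain ⟨T, hT, hST⟩ := Metric.totallyBounded_iff.1 hS (r / 2 * (η / 2)) (by positivity)
  obtain ⟨K, hK, hKT⟩ := isTightMeasureSet_iff_exists_isCompact_measure_compl_le.1
    (isTightMeasureSet_of_finite (hT.image fun ν => ν.1) (by
      rintro _ ⟨ν, -, rfl⟩
      exact isTightMeasureSet_singleton)) (ENNReal.ofReal (η / 2)) (by simpa using hη)
  obtain ⟨t, -, ht, hKt⟩ := hK.finite_cover_balls (half_pos hr)
  refine ⟨t, ht, ?_⟩
  rintro _ ⟨μ, hμ, rfl⟩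
  obtain ⟨ν, hν, hμν⟩ := Set.mem_iUnion₂.1 (hST hμ)
  have hcover : Metric.thickening (r / 2) K ⊆ ⋃ x ∈ t, Metric.closedBall x r := fun y hy => by
    obtain ⟨z, hz, hyz⟩ := Metric.mem_thickening_iff.1 hy
    obtain ⟨x, hx, hzx⟩ := Set.mem_iUnion₂.1 (hKt hz)
    refine Set.mem_iUnion₂.2 ⟨x, hx, ?_⟩
    rw [Metric.mem_ball] at hzx
    exact (dist_triangle y z x).trans (by linarith)
  have hKν : 1 - η / 2 ≤ ν.1.real K := by
    have hcompl : ν.1.real Kᶜ ≤ η / 2 :=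
      ENNReal.toReal_le_of_le_ofReal (by positivity) (hKT ν.1 ⟨ν, hν, rfl⟩)
    linarith [probReal_compl_eq_one_sub (μ := ν.1) hK.measurableSet]
  have hKμ : ν.1.real K ≤ μ.1.real (⋃ x ∈ t, Metric.closedBall x r) + η / 2 := by
    refine (measureReal_le_measureReal_thickening_add ν μ (half_pos hr) hK.measurableSet).trans
      (add_le_add (measureReal_mono hcover) ?_)
    rw [div_le_iff₀' (half_pos hr), dist_comm]
    exact (Metric.mem_ball.1 hμν).le
  have hU : MeasurableSet (⋃ x ∈ t, Metric.closedBall x r) :=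
    ht.measurableSet_biUnion fun _ _ => measurableSet_closedBall
  refine le_trans ?_ hηε.2.le
  rw [← ofReal_measureReal, probReal_compl_eq_one_sub hU]
  exact ENNReal.ofReal_le_ofReal (by linarith)

instance : CompleteSpace (WassersteinSpace X) := by
  refine Metric.complete_of_cauchySeq_tendsto fun ν hν => ?_
  have htight : IsTightMeasureSet ((fun ν : WassersteinSpace X => ν.1) '' Set.range ν) :=
    isTightMeasureSet_of_totallyBounded hν.totallyBounded_range
  have hcompact : IsCompact (closure (Set.range fun n => (ν n).toProbabilityMeasure)) :=
    isCompact_closure_of_isTightMeasureSet (htight.subset (by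
      rintro _ ⟨_, ⟨n, rfl⟩, rfl⟩
      exact ⟨ν n, ⟨n, rfl⟩, rfl⟩))
  obtain ⟨ρ', -, φ, hφ, hρ'⟩ := hcompact.isSeqCompact fun n => subset_closure ⟨n, rfl⟩
  have hbdd : IsBounded (Set.range (ν ∘ φ)) :=
    hν.isBounded_range.subset (Set.range_comp_subset_range φ ν)
  let ρ : WassersteinSpace X := ⟨ρ', finiteFirstMoment_of_tendsto hbdd hρ'⟩
  refine ⟨ρ, Metric.tendsto_atTop'.2 fun ε hε => ?_⟩
  obtain ⟨N, hN⟩ := Metric.cauchySeq_iff.1 hν (ε / 2) (half_pos hε)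
  refine ⟨N, fun n hn => (dist_le_of_tendsto (r := ε / 2) ?_ hρ').trans_lt (half_lt_self hε)⟩
  filter_upwards [hφ.tendsto_atTop.eventually_ge_atTop N] with j hj
  exact (hN n hn.le (φ j) hj).le

end WassersteinSpace

theorem exists_isFixedPt_forall_tendsto_iterate {X : Type*} [MetricSpace X] [CompleteSpace X]
    [Nonempty X] {f : X → X} {κ : ℕ → ℝ} (hκ : Tendsto κ atTop (𝓝 0))
    (hf : ∀ᶠ n in atTop, ∀ x y, dist (f^[n] x) (f^[n] y) ≤ κ n * dist x y) :
    ∃ z, Function.IsFixedPt f z ∧ ∀ x, Tendsto (fun n => f^[n] x) atTop (𝓝 z) := by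
  obtain ⟨n, hn, hκn⟩ := (hf.and (hκ.eventually (gt_mem_nhds one_half_pos))).exists
  have hcontr : ContractingWith (1 / 2) f^[n] :=
    ⟨by norm_num, LipschitzWith.of_dist_le_mul fun x y => (hn x y).trans (by
      gcongr; simpa using hκn.le)⟩
  obtain ⟨z, hz⟩ : ∃ z, Function.IsFixedPt f z := ⟨_, hcontr.isFixedPt_fixedPoint_iterate⟩
  refine ⟨z, hz, fun x => tendsto_iff_dist_tendsto_zero.2 ?_⟩
  refine squeeze_zero' (Eventually.of_forall fun _ => dist_nonneg) ?_
    (by simpa using hκ.mul_const (dist x z))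
  filter_upwards [hf] with k hk
  simpa only [(hz.iterate k).eq] using hk x z

section MarkovOperator

variable {X : Type*} [MeasurableSpace X] {π : Kernel X X} {ν ρ : Measure X}

instance [IsMarkovKernel π] [IsProbabilityMeasure ν] : IsProbabilityMeasure (Pmeas π ν) := by
  unfold Pmeas
  infer_instance

theorem integral_Pmeas {f : X → ℝ} (hf : Integrable f (Pmeas π ν)) :
    ∫ x, f x ∂(Pmeas π ν) = ∫ x, Pfun π f x ∂ν := by
  have hcomp : Pmeas π ν = (π ∘ₖ Kernel.const Unit ν) () := Measure.comp_eq_comp_const_apply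
  rw [hcomp] at hf ⊢
  rw [Kernel.integral_comp hf]
  simp only [Kernel.const_apply, Pfun]

theorem Pmeas_dirac (π : Kernel X X) (x : X) : Pmeas π (Measure.dirac x) = π x :=
  Measure.dirac_bind π.measurable x

theorem iterate_Pmeas (π : Kernel X X) (n : ℕ) : (Pmeas π)^[n] = Pmeas (π ^ n) := by
  induction n with
  | zero => exact funext fun ν => Measure.bind_dirac.symm
  | succ n ih =>
    funext ν
    rw [Function.iterate_succ_apply', ih, pow_succ']
    exact Measure.comp_assoc

theorem isMarkovKernel_pow (π : Kernel X X) [IsMarkovKernel π] (n : ℕ) :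
    IsMarkovKernel (π ^ n) := by
  induction n with
  | zero => exact inferInstanceAs (IsMarkovKernel Kernel.id)
  | succ n ih => exact pow_succ π n ▸ inferInstanceAs (IsMarkovKernel ((π ^ n) ∘ₖ π))

theorem measurable_Pfun {f : X → ℝ} (hf : Measurable f) :
    Measurable (Pfun π f) :=
  hf.stronglyMeasurable.integral_kernel.measurable

theorem norm_Pfun_le [IsMarkovKernel π] {f : X → ℝ} {C : ℝ} (hC : ∀ x, ‖f x‖ ≤ C) (x : X) :
    ‖Pfun π f x‖ ≤ C := by
  simpa [Pfun] using norm_integral_le_of_norm_le_const (μ := π x) (ae_of_all _ hC)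

theorem isBounded_range_Pfun [IsMarkovKernel π] {f : X → ℝ} (hf : IsBounded (Set.range f)) :
    IsBounded (Set.range (Pfun π f)) := by
  obtain ⟨C, hC⟩ := isBounded_iff_forall_norm_le.1 hf
  refine isBounded_iff_forall_norm_le.2 ⟨C, ?_⟩
  rintro _ ⟨x, rfl⟩
  exact norm_Pfun_le (fun y => hC _ (Set.mem_range_self y)) x

theorem eq_of_Pmeas_eq_of_forall_tendsto_Pfun [TopologicalSpace X] [HasOuterApproxClosed X]
    [BorelSpace X] [IsMarkovKernel π] [IsProbabilityMeasure ν] [IsFiniteMeasure ρ]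
    (hν : Pmeas π ν = ν)
    (hconv : ∀ (g : X →ᵇ ℝ) (x : X),
      Tendsto (fun n => Pfun (π ^ n) g x) atTop (𝓝 (∫ y, g y ∂ρ))) : ν = ρ := by
  have := isMarkovKernel_pow π
  refine ext_of_forall_integral_eq_of_IsFiniteMeasure fun g => ?_
  have hstat : ∀ n, ∫ x, Pfun (π ^ n) g x ∂ν = ∫ x, g x ∂ν := fun n => by
    have hpow : Pmeas (π ^ n) ν = ν := by
      rw [← iterate_Pmeas]
      exact Function.iterate_fixed hν n
    rw [← integral_Pmeas (g.integrable _), hpow]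
  have hlim : Tendsto (fun n => ∫ x, Pfun (π ^ n) g x ∂ν) atTop (𝓝 (∫ _, ∫ y, g y ∂ρ ∂ν)) :=
    tendsto_integral_of_dominated_convergence (fun _ => ‖g‖)
      (fun n => (measurable_Pfun g.continuous.measurable).aestronglyMeasurable)
      (integrable_const _) (fun n => ae_of_all _ (norm_Pfun_le g.norm_coe_le_norm))
      (ae_of_all _ (hconv g))
  simpa only [hstat, tendsto_const_nhds_iff, integral_const, probReal_univ, one_smul] using hlim

end MarkovOperator

namespace WassersteinSpace

variable {X : Type*} [MeasurableSpace X] [MetricSpace X] {π : Kernel X X}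

/-- The Markov operator `ν ↦ νP` as a self-map of the Wasserstein space that it preserves. -/
noncomputable def markovMap (π : Kernel X X)
    (hπ : ∀ ν : Measure X, FiniteFirstMoment ν → FiniteFirstMoment (Pmeas π ν)) :
    WassersteinSpace X → WassersteinSpace X :=
  Subtype.map (Pmeas π) hπ

theorem coe_iterate_markovMap
    (hπ : ∀ ν : Measure X, FiniteFirstMoment ν → FiniteFirstMoment (Pmeas π ν)) (n : ℕ)
    (ν : WassersteinSpace X) : ((markovMap π hπ)^[n] ν).1 = (Pmeas π)^[n] ν.1 :=
  Function.Semiconj.iterate_right (f := Subtype.val) (fun _ => rfl) n ν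

end WassersteinSpace

theorem exists_invariant_finiteFirstMoment {X : Type*} [MeasurableSpace X] [MetricSpace X]
    [CompleteSpace X] [SecondCountableTopology X] [BorelSpace X] [Nonempty X] {π : Kernel X X}
    {κ : ℕ → ℝ} (hκ : Tendsto κ atTop (𝓝 0))
    (hmom : ∀ ν : Measure X, FiniteFirstMoment ν → FiniteFirstMoment (Pmeas π ν))
    (hgap : ∀ᶠ n in atTop, ∀ ν₁ ν₂ : Measure X, FiniteFirstMoment ν₁ → FiniteFirstMoment ν₂ →
      wassDist ((Pmeas π)^[n] ν₁) ((Pmeas π)^[n] ν₂) ≤ κ n * wassDist ν₁ ν₂) :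
    ∃ ρ : Measure X, FiniteFirstMoment ρ ∧ Pmeas π ρ = ρ ∧ ∀ (g : X →ᵇ ℝ) (x : X),
      Tendsto (fun n => Pfun (π ^ n) g x) atTop (𝓝 (∫ y, g y ∂ρ)) := by
  have : Nonempty (WassersteinSpace X) := ‹Nonempty X›.map WassersteinSpace.dirac
  obtain ⟨ρ, hρ, hlim⟩ := exists_isFixedPt_forall_tendsto_iterate
    (f := WassersteinSpace.markovMap π hmom) hκ <| by
      filter_upwards [hgap] with n hn ν₁ ν₂
      simpa only [WassersteinSpace.dist_def, WassersteinSpace.coe_iterate_markovMap]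
        using hn ν₁.1 ν₂.1 ν₁.2 ν₂.2
  refine ⟨ρ.1, ρ.2, congrArg Subtype.val hρ, fun g x => ?_⟩
  have hiter : ∀ n, ((WassersteinSpace.markovMap π hmom)^[n] (.dirac x)).1 = (π ^ n) x := by
    intro n
    rw [WassersteinSpace.coe_iterate_markovMap, iterate_Pmeas]
    exact Pmeas_dirac (π ^ n) x
  simpa only [hiter, Pfun] using WassersteinSpace.tendsto_integral (hlim (.dirac x)) g

theorem integrable_comp_of_isBounded_range {Ω X : Type*} [MeasurableSpace Ω] [MeasurableSpace X]
    {μ : Measure Ω} [IsFiniteMeasure μ] {f : Ω → X} {g : X → ℝ} (hf : Measurable f)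
    (hg : Measurable g) (hgb : IsBounded (Set.range g)) : Integrable (fun ω => g (f ω)) μ := by
  obtain ⟨C, hC⟩ := isBounded_iff_forall_norm_le.1 hgb
  exact Integrable.of_bound (hg.comp hf).aestronglyMeasurable C
    (ae_of_all _ fun ω => hC _ (Set.mem_range_self _))

theorem tendsto_integral_mul_of_condExp_ae_eq_zero {Ω : Type*} {m : MeasurableSpace Ω}
    {μ : Measure Ω} [IsFiniteMeasure μ] {ℱ : Filtration ℕ m} {F : Ω → ℝ} {D : ℕ → Ω → ℝ} {C : ℝ}
    (hF : Integrable F μ) (hFm : StronglyMeasurable[⨆ n, ℱ n] F)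
    (hD : ∀ n, AEStronglyMeasurable (D n) μ) (hDC : ∀ n ω, ‖D n ω‖ ≤ C)
    (hD0 : ∀ n, μ[D n | ℱ n] =ᵐ[μ] 0) :
    Tendsto (fun n => ∫ ω, F ω * D n ω ∂μ) atTop (𝓝 0) := by
  have hmul : ∀ {G : Ω → ℝ}, Integrable G μ → ∀ n, Integrable (fun ω => G ω * D n ω) μ :=
    fun hG n => hG.mul_bdd (hD n) (ae_of_all _ (hDC n))
  have horth : ∀ n, ∫ ω, (μ[F | ℱ n]) ω * D n ω ∂μ = 0 := fun n => by
    have hpull : μ[μ[F | ℱ n] * D n | ℱ n] =ᵐ[μ] μ[F | ℱ n] * μ[D n | ℱ n] :=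
      condExp_mul_of_stronglyMeasurable_left stronglyMeasurable_condExp
        (hmul integrable_condExp n) (Integrable.of_bound (hD n) C (ae_of_all _ (hDC n)))
    rw [← integral_condExp (ℱ.le n)]
    refine integral_eq_zero_of_ae (hpull.trans ?_)
    filter_upwards [hD0 n] with ω hω
    simp only [Pi.mul_apply, hω, Pi.zero_apply, mul_zero]
  have hbound : ∀ n, ‖∫ ω, F ω * D n ω ∂μ‖ ≤ (∫ ω, ‖(μ[F | ℱ n] - F) ω‖ ∂μ) * C := fun n => by
    calc ‖∫ ω, F ω * D n ω ∂μ‖ = ‖∫ ω, (F ω * D n ω - (μ[F | ℱ n]) ω * D n ω) ∂μ‖ := by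
          rw [integral_sub (hmul hF n) (hmul integrable_condExp n), horth n, sub_zero]
      _ ≤ ∫ ω, ‖(μ[F | ℱ n] - F) ω‖ * C ∂μ := by
          refine norm_integral_le_of_norm_le ((integrable_condExp.sub hF).norm.mul_const C)
            (ae_of_all _ fun ω => ?_)
          rw [← sub_mul, norm_mul, Pi.sub_apply, norm_sub_rev]
          gcongr
          exact hDC n ω
      _ = _ := integral_mul_const _ _
  have hL1 : Tendsto (fun n => ∫ ω, ‖(μ[F | ℱ n] - F) ω‖ ∂μ) atTop (𝓝 0) := by
    simp only [integral_norm_eq_lintegral_enorm (integrable_condExp.sub hF).aestronglyMeasurable,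
      ← eLpNorm_one_eq_lintegral_enorm]
    exact (ENNReal.tendsto_toReal ENNReal.zero_ne_top).comp (hF.tendsto_eLpNorm_condExp hFm)
  exact squeeze_zero_norm hbound (by simpa only [zero_mul] using hL1.mul_const C)

theorem setIntegral_eq_zero_of_condExp_comp_iterate_ae_eq_zero {Ω : Type*}
    {m : MeasurableSpace Ω} {μ : Measure Ω} [IsFiniteMeasure μ] {ℱ : Filtration ℕ m} {T : Ω → Ω}
    {A : Set Ω} {G : Ω → ℝ} {C : ℝ} (hT : MeasurePreserving T μ μ)
    (hA : MeasurableSet[⨆ n, ℱ n] A) (hinv : T ⁻¹' A = A) (hG : StronglyMeasurable G)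
    (hGC : ∀ ω, ‖G ω‖ ≤ C) (hG0 : ∀ n, μ[G ∘ T^[n] | ℱ n] =ᵐ[μ] 0) :
    ∫ ω in A, G ω ∂μ = 0 := by
  have hAm : MeasurableSet A := iSup_le ℱ.le A hA
  have hTn : ∀ n, MeasurePreserving T^[n] μ μ := hT.iterate
  have hinvn : ∀ n, T^[n] ⁻¹' A = A := fun n => by
    rw [Set.preimage_iterate_eq, Function.iterate_fixed hinv]
  have hconst : ∀ n, ∫ ω, A.indicator 1 ω * (G ∘ T^[n]) ω ∂μ = ∫ ω in A, G ω ∂μ := fun n => by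
    calc ∫ ω, A.indicator 1 ω * (G ∘ T^[n]) ω ∂μ = ∫ ω in A, G (T^[n] ω) ∂μ := by
          rw [← integral_indicator hAm]
          refine integral_congr_ae (ae_of_all _ fun ω => ?_)
          by_cases hω : ω ∈ A <;> simp [hω]
      _ = ∫ ω in T^[n] ⁻¹' A, G (T^[n] ω) ∂μ := by rw [hinvn n]
      _ = ∫ ω in A, G ω ∂(μ.map T^[n]) := (setIntegral_map hAm hG.aestronglyMeasurable
          (hTn n).aemeasurable).symm
      _ = ∫ ω in A, G ω ∂μ := by rw [(hTn n).map_eq]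
  have hlim := tendsto_integral_mul_of_condExp_ae_eq_zero
    ((integrable_const (1 : ℝ)).indicator hAm) (stronglyMeasurable_one.indicator hA)
    (fun n => (hG.comp_measurable (hTn n).measurable).aestronglyMeasurable)
    (fun n ω => hGC (T^[n] ω)) hG0
  exact tendsto_nhds_unique (tendsto_const_nhds.congr fun n => (hconst n).symm) hlim

theorem measure_eq_of_forall_measure_inter_eq {Ω : Type*} {m m₁ m₂ : MeasurableSpace Ω}
    (h₁ : m₁ ≤ m) (h₂ : m₂ ≤ m) {μ ν : Measure[m] Ω} [IsFiniteMeasure μ]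
    (h : ∀ s t, MeasurableSet[m₁] s → MeasurableSet[m₂] t → μ (s ∩ t) = ν (s ∩ t))
    {s : Set Ω} (hs : MeasurableSet[m₁ ⊔ m₂] s) : μ s = ν s := by
  refine ext_on_measurableSpace_of_generate_finite m
    (Set.image2 (· ∩ ·) {s | MeasurableSet[m₁] s} {t | MeasurableSet[m₂] t}) ?_ (sup_le h₁ h₂)
    (le_antisymm (sup_le ?_ ?_) (MeasurableSpace.generateFrom_le ?_)) ?_
    (by simpa using h _ _ MeasurableSet.univ MeasurableSet.univ) hs
  · rintro _ ⟨s, hs, t, ht, rfl⟩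
    exact h s t hs ht
  · exact fun s hs => MeasurableSpace.measurableSet_generateFrom
      ⟨s, hs, Set.univ, MeasurableSet.univ, Set.inter_univ s⟩
  · exact fun t ht => MeasurableSpace.measurableSet_generateFrom
      ⟨Set.univ, MeasurableSet.univ, t, ht, Set.univ_inter t⟩
  · rintro _ ⟨s, hs, t, ht, rfl⟩
    exact MeasurableSet.inter (le_sup_left (a := m₁) (b := m₂) s hs)
      (le_sup_right (a := m₁) (b := m₂) t ht)
  · rintro _ ⟨s, hs, t, ht, rfl⟩ _ ⟨s', hs', t', ht', rfl⟩ -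
    exact ⟨s ∩ s', MeasurableSet.inter hs hs', t ∩ t', MeasurableSet.inter ht ht',
      Set.inter_inter_inter_comm s s' t t'⟩

theorem measure_ext_of_iSup_eq {Ω ι : Type*} [SemilatticeSup ι] [Nonempty ι]
    {m : MeasurableSpace Ω} {ℱ : Filtration ι m} (hℱ : ⨆ n, ℱ n = m) {μ ν : Measure Ω}
    [IsFiniteMeasure μ]
    (h : ∀ n s, MeasurableSet[ℱ n] s → μ s = ν s) : μ = ν := by
  have hpi : IsPiSystem (⋃ n, {s | MeasurableSet[ℱ n] s}) :=
    isPiSystem_iUnion_of_monotone _ (fun n => (ℱ n).isPiSystem_measurableSet) fun _ _ => ℱ.mono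
  refine ext_of_generate_finite _ ?_ hpi ?_ ?_
  · exact hℱ.symm.trans (MeasurableSpace.generateFrom_iUnion_measurableSet _).symm
  · intro s hs
    obtain ⟨n, hn⟩ := Set.mem_iUnion.1 hs
    exact h n s hn
  · exact h (Classical.arbitrary ι) _ MeasurableSet.univ

section NaturalFiltration

variable {X : Type*} [MeasurableSpace X] [MetricSpace X] [SecondCountableTopology X]
  [BorelSpace X]

theorem natFilt_succ (n : ℕ) : (natFilt (n + 1) : MeasurableSpace (ℕ → X)) =
    natFilt n ⊔ MeasurableSpace.comap (fun ω => ω (n + 1)) inferInstance :=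
  Nat.iSup_le_succ (fun k => MeasurableSpace.comap (fun ω : ℕ → X => ω k) inferInstance) n

theorem natFilt_zero : (natFilt 0 : MeasurableSpace (ℕ → X)) =
    MeasurableSpace.comap (fun ω => ω 0) inferInstance := by
  simp [natFilt, Filtration.natural]

theorem measurable_natFilt_coord {k n : ℕ} (hkn : k ≤ n) :
    Measurable[natFilt n] fun ω : ℕ → X => ω k :=
  Measurable.mono (comap_measurable _)
    (le_iSup₂_of_le (f := fun j (_ : j ≤ n) =>
      MeasurableSpace.comap (fun ω : ℕ → X => ω j) inferInstance) k hkn le_rfl) le_rfl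

theorem iSup_natFilt : ⨆ n, natFilt n = (MeasurableSpace.pi : MeasurableSpace (ℕ → X)) :=
  le_antisymm (iSup_le natFilt.le) <| iSup_le fun n =>
    (measurable_natFilt_coord le_rfl).comap_le.trans (le_iSup (fun n => natFilt n) n)

end NaturalFiltration

/-- The shift `θ` on trajectories, `(θω)ₙ = ωₙ₊₁`. -/
def pathShift {X : Type*} (ω : ℕ → X) (n : ℕ) : X := ω (n + 1)

theorem iterate_pathShift {X : Type*} (m : ℕ) (ω : ℕ → X) (n : ℕ) :
    pathShift^[m] ω n = ω (n + m) := by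
  induction m generalizing ω with
  | zero => rfl
  | succ m ih =>
    rw [Function.iterate_succ_apply, ih]
    rfl

theorem measurable_pathShift {X : Type*} [MeasurableSpace X] :
    Measurable (pathShift : (ℕ → X) → ℕ → X) :=
  measurable_pi_lambda _ fun n => measurable_pi_apply (n + 1)

/-- The martingale increment `g(Xₙ₊₁) - Pg(Xₙ)` of a function `g` along the chain. -/
noncomputable def markovIncrement {X : Type*} [MeasurableSpace X] (π : Kernel X X) (g : X → ℝ)
    (n : ℕ) (ω : ℕ → X) : ℝ :=
  g (ω (n + 1)) - Pfun π g (ω n)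

section MarkovIncrement

variable {X : Type*} [MeasurableSpace X] {π : Kernel X X} {g : X → ℝ}

theorem measurable_markovIncrement (hg : Measurable g) (n : ℕ) :
    Measurable (markovIncrement π g n) :=
  (hg.comp (measurable_pi_apply (n + 1))).sub ((measurable_Pfun hg).comp (measurable_pi_apply n))

theorem norm_markovIncrement_le [IsMarkovKernel π] {C : ℝ} (hC : ∀ x, ‖g x‖ ≤ C) (n : ℕ)
    (ω : ℕ → X) : ‖markovIncrement π g n ω‖ ≤ C + C :=
  (norm_sub_le _ _).trans (add_le_add (hC _) (norm_Pfun_le hC _))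

theorem markovIncrement_comp_iterate_pathShift (n m : ℕ) :
    markovIncrement π g n ∘ pathShift^[m] = markovIncrement π g (n + m) := by
  funext ω
  simp only [markovIncrement, Function.comp_apply, iterate_pathShift, Nat.add_right_comm n 1 m]

end MarkovIncrement

section Chain

variable {X : Type*} [MeasurableSpace X] [MetricSpace X] [SecondCountableTopology X]
  [BorelSpace X] {π : Kernel X X} {ν : Measure X} {P P₁ P₂ : Measure (ℕ → X)}

theorem measurable_natFilt_iterate_pathShift (n m : ℕ) :
    Measurable[natFilt (n + m), natFilt n] (pathShift^[m] : (ℕ → X) → ℕ → X) := by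
  refine measurable_iff_comap_le.2 ?_
  simp only [natFilt, Filtration.natural, MeasurableSpace.comap_iSup, MeasurableSpace.comap_comp]
  refine iSup₂_le fun j hj => ?_
  simp only [Function.comp_def, iterate_pathShift]
  exact (measurable_natFilt_coord (Nat.add_le_add_right hj m)).comap_le

theorem isMarkovChainLaw_of_forall_setIntegral_eq [IsMarkovKernel π]
    (hP : IsProbabilityMeasure P) (hinit : P.map (fun ω => ω 0) = ν)
    (hmarkov : ∀ (n : ℕ) (g : X → ℝ), Measurable g → IsBounded (Set.range g) →
      ∀ s, MeasurableSet[natFilt n] s →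
        ∫ ω in s, g (ω (n + 1)) ∂P = ∫ ω in s, Pfun π g (ω n) ∂P) :
    IsMarkovChainLaw π ν P where
  prob := hP
  init := hinit
  markov n g hg hgb := by
    refine (ae_eq_condExp_of_forall_setIntegral_eq (natFilt.le n)
      (integrable_comp_of_isBounded_range (measurable_pi_apply (n + 1)) hg hgb)
      (fun s _ _ => (integrable_comp_of_isBounded_range (measurable_pi_apply n)
        (measurable_Pfun hg) (isBounded_range_Pfun hgb)).integrableOn)
      (fun s hs _ => (hmarkov n g hg hgb s hs).symm) ?_).symm
    exact ((measurable_Pfun hg).comp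
      (measurable_natFilt_coord le_rfl)).stronglyMeasurable.aestronglyMeasurable

namespace IsMarkovChainLaw

theorem setIntegral_succ (h : IsMarkovChainLaw π ν P) {n : ℕ} {s : Set (ℕ → X)}
    (hs : MeasurableSet[natFilt n] s) {g : X → ℝ} (hg : Measurable g)
    (hgb : IsBounded (Set.range g)) :
    ∫ ω in s, g (ω (n + 1)) ∂P = ∫ ω in s, Pfun π g (ω n) ∂P := by
  have := h.prob
  rw [← setIntegral_condExp (natFilt.le n)
    (integrable_comp_of_isBounded_range (measurable_pi_apply (n + 1)) hg hgb) hs]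
  exact setIntegral_congr_ae (natFilt.le n s hs)
    ((h.markov n g hg hgb).mono fun ω hω _ => hω)

theorem measure_inter_preimage_succ [IsMarkovKernel π] (h : IsMarkovChainLaw π ν P) {n : ℕ}
    {s : Set (ℕ → X)} (hs : MeasurableSet[natFilt n] s) {B : Set X} (hB : MeasurableSet B) :
    P (s ∩ (fun ω => ω (n + 1)) ⁻¹' B) = ∫⁻ ω in s, π (ω n) B ∂P := by
  have := h.prob
  have hind : Measurable (B.indicator (1 : X → ℝ)) := measurable_one.indicator hB
  have hbdd : IsBounded (Set.range (B.indicator (1 : X → ℝ))) :=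
    (Set.toFinite {0, 1}).isBounded.subset <| Set.range_subset_iff.2 fun x =>
      (Set.indicator_eq_zero_or_self B 1 x).imp_right id
  have hpre : MeasurableSet ((fun ω : ℕ → X => ω (n + 1)) ⁻¹' B) := measurable_pi_apply (n + 1) hB
  have hPfun : ∀ x, Pfun π (B.indicator 1) x = (π x).real B := fun x => integral_indicator_one hB
  have hreal : P.real (s ∩ (fun ω => ω (n + 1)) ⁻¹' B) =
      ∫ ω in s, Pfun π (B.indicator 1) (ω n) ∂P := by
    rw [← h.setIntegral_succ hs hind hbdd, Set.inter_comm, ← measureReal_restrict_apply hpre,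
      ← integral_indicator_one hpre]
    rfl
  rw [← ofReal_measureReal, hreal, ofReal_integral_eq_lintegral_ofReal]
  · refine lintegral_congr fun ω => ?_
    rw [hPfun, ofReal_measureReal]
  · exact integrable_comp_of_isBounded_range (measurable_pi_apply n) (measurable_Pfun hind)
      (isBounded_range_Pfun hbdd)
  · exact ae_of_all _ fun ω => measureReal_nonneg.trans_eq (hPfun (ω n)).symm

theorem measure_eq_of_measurableSet_natFilt [IsMarkovKernel π] (h₁ : IsMarkovChainLaw π ν P₁)
    (h₂ : IsMarkovChainLaw π ν P₂) (n : ℕ) {s : Set (ℕ → X)} (hs : MeasurableSet[natFilt n] s) :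
    P₁ s = P₂ s := by
  have := h₁.prob
  have := h₂.prob
  induction n generalizing s with
  | zero =>
    rw [natFilt_zero] at hs
    obtain ⟨B, hB, rfl⟩ := hs
    rw [← Measure.map_apply (measurable_pi_apply 0) hB, h₁.init, ← h₂.init,
      Measure.map_apply (measurable_pi_apply 0) hB]
  | succ n ih =>
    have htrim : P₁.trim (natFilt.le n) = P₂.trim (natFilt.le n) :=
      @Measure.ext _ (natFilt n) _ _ fun t ht => by
        rw [trim_measurableSet_eq _ ht, trim_measurableSet_eq _ ht, ih ht]
    rw [natFilt_succ] at hs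
    refine measure_eq_of_forall_measure_inter_eq (natFilt.le n)
      (measurable_pi_apply (n + 1)).comap_le (fun s t hs ht => ?_) hs
    obtain ⟨B, hB, rfl⟩ := ht
    have hmeas : Measurable[natFilt n] fun ω : ℕ → X => π (ω n) B :=
      (π.measurable_coe hB).comp (measurable_natFilt_coord le_rfl)
    rw [h₁.measure_inter_preimage_succ hs hB, h₂.measure_inter_preimage_succ hs hB,
      ← setLIntegral_trim (natFilt.le n) hmeas hs, ← setLIntegral_trim (natFilt.le n) hmeas hs,
      htrim]

theorem unique [IsMarkovKernel π] (h₁ : IsMarkovChainLaw π ν P₁) (h₂ : IsMarkovChainLaw π ν P₂) :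
    P₁ = P₂ :=
  have := h₁.prob
  measure_ext_of_iSup_eq iSup_natFilt fun n _ hs =>
    h₁.measure_eq_of_measurableSet_natFilt h₂ n hs

theorem map_succ [IsMarkovKernel π] (h : IsMarkovChainLaw π ν P) (n : ℕ) :
    P.map (fun ω => ω (n + 1)) = Pmeas π (P.map fun ω => ω n) := by
  ext B hB
  have hX : ∀ k, Measurable fun ω : ℕ → X => ω k := measurable_pi_apply
  rw [Measure.map_apply (hX _) hB, Pmeas, Measure.bind_apply hB π.aemeasurable,
    lintegral_map (π.measurable_coe hB) (hX n)]
  simpa using h.measure_inter_preimage_succ (n := n) MeasurableSet.univ hB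

theorem map_pathShift [IsMarkovKernel π] (h : IsMarkovChainLaw π ν P) :
    IsMarkovChainLaw π (Pmeas π ν) (P.map pathShift) := by
  have := h.prob
  refine isMarkovChainLaw_of_forall_setIntegral_eq
    (Measure.isProbabilityMeasure_map measurable_pathShift.aemeasurable) ?_
    fun n g hg hgb s hs => ?_
  · rw [Measure.map_map (measurable_pi_apply 0) measurable_pathShift, ← h.init]
    exact h.map_succ 0
  · have hg' : ∀ k {f : X → ℝ}, Measurable f → Measurable fun ω : ℕ → X => f (ω k) :=
      fun k _ hf => hf.comp (measurable_pi_apply k)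
    rw [setIntegral_map (natFilt.le n s hs) (hg' _ hg).aestronglyMeasurable
      measurable_pathShift.aemeasurable, setIntegral_map (natFilt.le n s hs)
      (hg' _ (measurable_Pfun hg)).aestronglyMeasurable measurable_pathShift.aemeasurable]
    exact h.setIntegral_succ (measurable_natFilt_iterate_pathShift n 1 hs) hg hgb

theorem measurePreserving_pathShift [IsMarkovKernel π] (h : IsMarkovChainLaw π ν P)
    (hν : Pmeas π ν = ν) : MeasurePreserving pathShift P P :=
  ⟨measurable_pathShift, (hν ▸ h.map_pathShift).unique h⟩

theorem condExp_markovIncrement_ae_eq_zero [IsMarkovKernel π] (h : IsMarkovChainLaw π ν P) (n : ℕ)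
    {g : X → ℝ} (hg : Measurable g) (hgb : IsBounded (Set.range g)) :
    P[markovIncrement π g n | natFilt n] =ᵐ[P] 0 := by
  have := h.prob
  have hint : Integrable (fun ω => Pfun π g (ω n)) P :=
    integrable_comp_of_isBounded_range (measurable_pi_apply n) (measurable_Pfun hg)
      (isBounded_range_Pfun hgb)
  have hmeas : StronglyMeasurable[natFilt n] fun ω : ℕ → X => Pfun π g (ω n) :=
    ((measurable_Pfun hg).comp (measurable_natFilt_coord le_rfl)).stronglyMeasurable
  have hsub := condExp_sub (integrable_comp_of_isBounded_range (μ := P)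
    (measurable_pi_apply (n + 1)) hg hgb) hint (natFilt n)
  rw [condExp_of_stronglyMeasurable (natFilt.le n) hmeas hint] at hsub
  refine hsub.trans ?_
  filter_upwards [h.markov n g hg hgb] with ω hω
  exact sub_eq_zero.2 hω

theorem setIntegral_markovIncrement_eq_zero [IsMarkovKernel π] (h : IsMarkovChainLaw π ν P)
    (hν : Pmeas π ν = ν) {A : Set (ℕ → X)} (hA : MeasurableSet A)
    (hinv : pathShift ⁻¹' A = A) {n : ℕ} {s : Set (ℕ → X)} (hs : MeasurableSet[natFilt n] s)
    {g : X → ℝ} (hg : Measurable g) (hgb : IsBounded (Set.range g)) :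
    ∫ ω in A ∩ s, markovIncrement π g n ω ∂P = 0 := by
  have := h.prob
  let ℱ : Filtration ℕ (MeasurableSpace.pi : MeasurableSpace (ℕ → X)) :=
    ⟨fun m => natFilt (n + m), fun _ _ hij => natFilt.mono (Nat.add_le_add_left hij n),
      fun m => natFilt.le (n + m)⟩
  have hℱ : MeasurableSpace.pi ≤ ⨆ m, ℱ m := iSup_natFilt.symm.trans_le <|
    iSup_mono fun m => natFilt.mono (Nat.le_add_left m n)
  have hs' : MeasurableSet s := natFilt.le n s hs
  obtain ⟨C, hC⟩ := isBounded_iff_forall_norm_le.1 hgb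
  have hbound : ∀ k (ω : ℕ → X), ‖markovIncrement π g k ω‖ ≤ C + C :=
    norm_markovIncrement_le fun x => hC _ (Set.mem_range_self x)
  have hshift : ∀ m, s.indicator (markovIncrement π g n) ∘ pathShift^[m] =
      (pathShift^[m] ⁻¹' s).indicator (markovIncrement π g (n + m)) := fun m => funext fun ω => by
    rw [← markovIncrement_comp_iterate_pathShift, Set.indicator_comp_right, Function.comp_apply]
  rw [← setIntegral_indicator hs']
  refine setIntegral_eq_zero_of_condExp_comp_iterate_ae_eq_zero (ℱ := ℱ)
    (h.measurePreserving_pathShift hν) (hℱ A hA) hinv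
    ((measurable_markovIncrement hg n).indicator hs').stronglyMeasurable
    (fun ω => (norm_indicator_le_norm_self _ _).trans (hbound n ω)) fun m => ?_
  have hint : Integrable (markovIncrement π g (n + m)) P :=
    .of_bound (measurable_markovIncrement hg _).aestronglyMeasurable _ (ae_of_all _ (hbound _))
  rw [hshift]
  refine (condExp_indicator hint (measurable_natFilt_iterate_pathShift n m hs)).trans ?_
  filter_upwards [h.condExp_markovIncrement_ae_eq_zero (n + m) hg hgb] with ω hω
  exact Set.indicator_apply_eq_zero.2 fun _ => hω

theorem setIntegral_inter_succ [IsMarkovKernel π] (h : IsMarkovChainLaw π ν P)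
    (hν : Pmeas π ν = ν) {A : Set (ℕ → X)} (hA : MeasurableSet A)
    (hinv : pathShift ⁻¹' A = A) {n : ℕ} {s : Set (ℕ → X)} (hs : MeasurableSet[natFilt n] s)
    {g : X → ℝ} (hg : Measurable g) (hgb : IsBounded (Set.range g)) :
    ∫ ω in A ∩ s, g (ω (n + 1)) ∂P = ∫ ω in A ∩ s, Pfun π g (ω n) ∂P := by
  have := h.prob
  rw [← sub_eq_zero, ← integral_sub]
  · exact h.setIntegral_markovIncrement_eq_zero hν hA hinv hs hg hgb
  · exact integrable_comp_of_isBounded_range (measurable_pi_apply (n + 1)) hg hgb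
  · exact integrable_comp_of_isBounded_range (measurable_pi_apply n) (measurable_Pfun hg)
      (isBounded_range_Pfun hgb)

theorem cond [IsMarkovKernel π] (h : IsMarkovChainLaw π ν P) (hν : Pmeas π ν = ν)
    {A : Set (ℕ → X)} (hA : MeasurableSet A) (hinv : pathShift ⁻¹' A = A) (hPA : P A ≠ 0) :
    IsMarkovChainLaw π (P[|A].map fun ω => ω 0) P[|A] := by
  have := h.prob
  refine isMarkovChainLaw_of_forall_setIntegral_eq (cond_isProbabilityMeasure hPA) rfl
    fun n g hg hgb s hs => ?_
  simp only [ProbabilityTheory.cond, Measure.restrict_smul, integral_smul_measure,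
    Measure.restrict_restrict (natFilt.le n s hs), Set.inter_comm s A,
    h.setIntegral_inter_succ hν hA hinv hs hg hgb]

theorem ergodic_pathShift [IsMarkovKernel π] (h : IsMarkovChainLaw π ν P) (hν : Pmeas π ν = ν)
    (huniq : ∀ ρ : Measure X, IsProbabilityMeasure ρ → Pmeas π ρ = ρ → ρ = ν) :
    Ergodic pathShift P := by
  have := h.prob
  have hθ := h.measurePreserving_pathShift hν
  refine ⟨hθ, ⟨fun A hA hinv => eventuallyConst_set'.2 <| or_iff_not_imp_left.2 fun hPA => ?_⟩⟩
  have hcond := h.cond hν hA hinv (mt ae_eq_empty.2 hPA)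
  have := hcond.prob
  have hθA : MeasurePreserving pathShift P[|A] P[|A] :=
    (hinv ▸ hθ.restrict_preimage hA).smul_measure _
  have hstat : Pmeas π (P[|A].map fun ω => ω 0) = P[|A].map fun ω => ω 0 := by
    rw [← hcond.map_pathShift.init, hθA.map_eq]
  have hinit : (P[|A].map fun ω => ω 0) = ν :=
    huniq _ (Measure.isProbabilityMeasure_map (measurable_pi_apply 0).aemeasurable) hstat
  have hPeq : P = P[|A] := h.unique (hinit ▸ hcond)
  rw [ae_eq_univ, hPeq, prob_compl_eq_zero_iff hA]
  exact cond_apply_self (mt ae_eq_empty.2 hPA) (measure_ne_top P A)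

end IsMarkovChainLaw

end Chain

theorem exists_unique_ergodic_invariant_measure_general {X : Type*} [MeasurableSpace X]
    [MetricSpace X] [CompleteSpace X] [SecondCountableTopology X] [BorelSpace X] [Nonempty X]
    (π : Kernel X X) [IsMarkovKernel π] (κ : ℕ → ℝ) (hκ : Tendsto κ atTop (𝓝 0))
    (hmom : ∀ ν : Measure X, FiniteFirstMoment ν → FiniteFirstMoment (Pmeas π ν))
    (hgap : ∀ᶠ n in atTop, ∀ ν₁ ν₂ : Measure X, FiniteFirstMoment ν₁ → FiniteFirstMoment ν₂ →
      wassDist ((Pmeas π)^[n] ν₁) ((Pmeas π)^[n] ν₂) ≤ κ n * wassDist ν₁ ν₂) :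
    ∃ ρ : Measure X, IsProbabilityMeasure ρ ∧ Pmeas π ρ = ρ ∧ FiniteFirstMoment ρ ∧
      (∀ ν : Measure X, IsProbabilityMeasure ν → Pmeas π ν = ν → ν = ρ) ∧
      ∀ P : Measure (ℕ → X), IsMarkovChainLaw π ρ P → Ergodic pathShift P := by
  obtain ⟨ρ, hρ, hinv, hconv⟩ := exists_invariant_finiteFirstMoment hκ hmom hgap
  have := hρ.1
  have huniq : ∀ ν : Measure X, IsProbabilityMeasure ν → Pmeas π ν = ν → ν = ρ :=
    fun ν _ hν => eq_of_Pmeas_eq_of_forall_tendsto_Pfun hν hconv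
  exact ⟨ρ, hρ.1, hinv, hρ, huniq, fun P hP => hP.ergodic_pathShift hinv huniq⟩

/-- Under (H0)--(H3) there exists a unique invariant probability measure `μ*`; it is ergodic
(the stationary chain is ergodic for the shift) and has finite first moment. -/
theorem exists_unique_ergodic_invariant_measure
    {E : Type*} [MeasurableSpace E] [MetricSpace E] [CompleteSpace E]
    [SecondCountableTopology E] [BorelSpace E]
    (π : Kernel E E) [IsMarkovKernel π] (γ c : ℝ) (hγ : γ ∈ Set.Ioo (0 : ℝ) 1) (hc : 0 < c)
    -- (H0): the Feller property
    (hH0 : ∀ f : E → ℝ, Continuous f → IsBounded (Set.range f) → Continuous (Pfun π f))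
    -- (H1): `P` preserves `M_{1,1}`
    (hH1 : ∀ ν : MeasureTheory.Measure E, FiniteFirstMoment ν → FiniteFirstMoment (Pmeas π ν))
    -- (H2): spectral gap in the Wasserstein metric
    (hH2 : ∀ n : ℕ, 1 ≤ n → ∀ ν₁ ν₂ : MeasureTheory.Measure E, FiniteFirstMoment ν₁ →
      FiniteFirstMoment ν₂ →
      wassDist ((Pmeas π)^[n] ν₁) ((Pmeas π)^[n] ν₂) ≤ c * γ ^ n * wassDist ν₁ ν₂)
    -- the chain: initial distribution `μ ∈ M_{1,1}` and its law `Pμ` on `E^ℕ`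
    (μ : MeasureTheory.Measure E) (hμ : FiniteFirstMoment μ)
    (Pμ : MeasureTheory.Measure (ℕ → E)) (hPμ : IsMarkovChainLaw π μ Pμ)
    -- (H3): uniformly bounded moments of order `2 + δ`
    (x₀ : E) (δ : ℝ) (hδ : 0 < δ)
    (hH3int : ∀ n : ℕ, Integrable (fun ω : ℕ → E => dist x₀ (ω n) ^ (2 + δ)) Pμ)
    (hH3 : ∃ M : ℝ, ∀ n : ℕ, ∫ ω : ℕ → E, dist x₀ (ω n) ^ (2 + δ) ∂Pμ ≤ M) :
    ∃ μstar : MeasureTheory.Measure E,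
      IsProbabilityMeasure μstar ∧ Pmeas π μstar = μstar ∧
      FiniteFirstMoment μstar ∧
      (∀ ν : MeasureTheory.Measure E, IsProbabilityMeasure ν → Pmeas π ν = ν → ν = μstar) ∧
      ∀ Pstar : MeasureTheory.Measure (ℕ → E), IsMarkovChainLaw π μstar Pstar →
        Ergodic (fun (ω : ℕ → E) (n : ℕ) => ω (n + 1)) Pstar := by
  have : Nonempty E := ⟨x₀⟩
  exact exists_unique_ergodic_invariant_measure_general π (fun n => c * γ ^ n)
    (by simpa using (tendsto_pow_atTop_nhds_zero_of_lt_one hγ.1.le hγ.2).const_mul c) hH1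
    (eventually_atTop.2 ⟨1, hH2⟩)
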